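/- Let G be a finite non-abelian d-group (d prime) possessing an abelian maximal subgroup. Then G has maximal nilpotency class if and only if either |Z(G)| = d or [G : G'] = d^2. -/

import Mathlib

universe u

/-- In a `d`-group of order `d^m`, `m ≥ 2`, the class is at most `m - 1`, and a non-abelian group
attaining the bound has center of order `d`. -/
theorem class_le_aux (d : ℕ) (hd : d.Prime) (m : ℕ) :
    ∀ (G : Type u) [Group G] [Finite G] [Group.IsNilpotent G], 2 ≤ m → Nat.card G = d ^ m →
      Group.nilpotencyClass G ≤ m - 1 ∧
      ((¬ ∀ a b : G, a * b = b * a) → Group.nilpotencyClass G = m - 1 →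
        Nat.card (Subgroup.center G) = d) := by
  induction m using Nat.strong_induction_on with
  | _ m ih =>
  intro G _ _ _ hm hcard
  by_cases hc : ∀ a b : G, a * b = b * a
  · have h1 : Group.nilpotencyClass G ≤ 1 :=
      Group.IsNilpotent.nilpotencyClass_le_one_iff.mpr ⟨⟨hc⟩⟩
    exact ⟨by omega, fun h => absurd hc h⟩
  · have : Nontrivial G := by
      by_contra h
      rw [not_nontrivial_iff_subsingleton] at h
      exact hc fun a b => Subsingleton.elim _ _
    have : Fact d.Prime := ⟨hd⟩
    have hmul := Subgroup.card_mul_index (Subgroup.center G)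
    rw [hcard] at hmul
    obtain ⟨k, hkm, hk⟩ := (Nat.dvd_prime_pow hd).mp (Dvd.intro_left _ hmul)
    obtain ⟨l, hlm, hl⟩ := (Nat.dvd_prime_pow hd).mp (Dvd.intro _ hmul)
    have hlk : l + k = m := by
      rw [hk, hl, ← pow_add] at hmul
      exact Nat.pow_right_injective hd.two_le hmul
    have hl0 : l ≠ 0 := by
      rintro rfl
      rw [pow_zero] at hl
      exact Group.IsNilpotent.center_ne_bot G (Subgroup.card_eq_one.mp hl)
    have hk2 : 2 ≤ k := by
      by_contra hlt
      have hcyc : IsCyclic (G ⧸ Subgroup.center G) := by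
        have hq : Nat.card (G ⧸ Subgroup.center G) = d ^ k := hk
        have : k = 0 ∨ k = 1 := by omega
        rcases this with rfl | rfl
        · rw [pow_zero] at hq
          have : Subsingleton (G ⧸ Subgroup.center G) := (Nat.card_eq_one_iff_unique.mp hq).1
          infer_instance
        · rw [pow_one] at hq
          exact isCyclic_of_prime_card hq
      have := isMulCommutative_of_isCyclic_quotient_center_self (G := G)
      exact hc this.is_comm.comm
    have h1 := (ih k (by omega) (G ⧸ Subgroup.center G) hk2 hk).1
    have h2 := Group.nilpotencyClass_eq_quotient_center_plus_one (G := G)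
    refine ⟨by omega, fun _ h => ?_⟩
    have : l = 1 := by omega
    rw [hl, this, pow_one]

/-- Commutation with `x` as a homomorphism on an abelian normal subgroup. -/
def commHom {G : Type*} [Group G] (A : Subgroup G) [hN : A.Normal]
    (hA : ∀ a ∈ A, ∀ b ∈ A, a * b = b * a) (x : G) (K : Subgroup G) (hK : K ≤ A) : K →* G where
  toFun a := x * a * x⁻¹ * (a : G)⁻¹
  map_one' := by simp
  map_mul' a b := by
    have h := hA (a : G)⁻¹ (A.inv_mem (hK a.2)) (x * b * x⁻¹ * (b : G)⁻¹)
      (A.mul_mem (hN.conj_mem _ (hK b.2) x) (A.inv_mem (hK b.2)))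
    have h2 := hA _ (hK a.2) _ (hK b.2)
    calc x * ((a * b : K) : G) * x⁻¹ * ((a * b : K) : G)⁻¹
        = x * a * x⁻¹ * ((x * b * x⁻¹ * (b : G)⁻¹) * (a : G)⁻¹) := by
          push_cast; group
      _ = _ := by rw [← h]; group

/-- Main facts about a non-abelian group with a normal abelian coatom. -/
theorem main_facts {G : Type*} [Group G] [Finite G]
    (hnab : ¬ ∀ a b : G, a * b = b * a) (A : Subgroup G) [hN : A.Normal] (hco : IsCoatom A)
    (hA : ∀ a ∈ A, ∀ b ∈ A, a * b = b * a) :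
    commutator G ≤ A ∧
    Nat.card A = Nat.card (Subgroup.center G) * Nat.card (commutator G) ∧
    ∀ K L : Subgroup G, K ≤ A → ⁅K, (⊤ : Subgroup G)⁆ ≤ L →
      Nat.card K ≤ Nat.card (Subgroup.center G) * Nat.card L := by
  obtain ⟨x, hx⟩ : ∃ x, x ∉ A := by
    by_contra h
    push Not at h
    exact hco.1 (eq_top_iff.mpr fun g _ => h g)
  have top_of : ∀ (S : Subgroup G) (y : G), y ∉ A → A ≤ S → y ∈ S → S = ⊤ := by
    intro S y hy hAS hyS
    exact hco.2 S (lt_of_le_of_ne hAS fun h => hy (h ▸ hyS))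
  have cent_of : ∀ y, y ∉ A → ∀ a ∈ A, y * a = a * y → a ∈ Subgroup.center G := by
    intro y hy a ha hc
    have : Subgroup.centralizer {a} = ⊤ := by
      refine top_of _ y hy (fun b hb => ?_) ?_
      · rw [Subgroup.mem_centralizer_singleton_iff]; exact hA _ hb _ ha
      · rw [Subgroup.mem_centralizer_singleton_iff]; exact hc
    rw [Subgroup.mem_center_iff]
    intro g
    have hg : g ∈ Subgroup.centralizer {a} := this ▸ Subgroup.mem_top g
    rw [Subgroup.mem_centralizer_singleton_iff] at hg
    exact hg
  have hZA : Subgroup.center G ≤ A := by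
    intro z hz
    by_contra hzA
    have hAc : A ≤ Subgroup.center G := fun a ha =>
      cent_of z hzA a ha ((Subgroup.mem_center_iff.mp hz a).symm)
    have := top_of _ z hzA hAc hz
    exact hnab fun a b =>
      ((Subgroup.mem_center_iff.mp (this ▸ Subgroup.mem_top b : b ∈ Subgroup.center G)) a)
  -- generic facts on the homomorphism
  have ker_cent : ∀ (K : Subgroup G) (hK : K ≤ A) (a : K),
      a ∈ (commHom A hA x K hK).ker ↔ (a : G) ∈ Subgroup.center G := by
    intro K hK a
    rw [MonoidHom.mem_ker]
    change x * a * x⁻¹ * (a : G)⁻¹ = 1 ↔ _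
    constructor
    · intro h
      refine cent_of x hx a (hK a.2) ?_
      rw [mul_inv_eq_one, mul_inv_eq_iff_eq_mul] at h
      exact h
    · intro h
      rw [mul_inv_eq_one, mul_inv_eq_iff_eq_mul]
      exact Subgroup.mem_center_iff.mp h x
  have cardK : ∀ (K : Subgroup G) (hK : K ≤ A), Nat.card K =
      Nat.card (commHom A hA x K hK).ker * Nat.card (commHom A hA x K hK).range := by
    intro K hK
    rw [← Subgroup.index_ker, Subgroup.card_mul_index]
  have kerle : ∀ (K : Subgroup G) (hK : K ≤ A),
      Nat.card (commHom A hA x K hK).ker ≤ Nat.card (Subgroup.center G) := by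
    intro K hK
    refine Nat.card_le_card_of_injective
      (fun a => (⟨(a.1 : G), (ker_cent K hK a.1).mp a.2⟩ : Subgroup.center G)) ?_
    intro a b h
    exact Subtype.ext (Subtype.ext (congrArg (fun z : Subgroup.center G => (z : G)) h))
  set N := (commHom A hA x A le_rfl).range with hNdef
  have memN : ∀ a ∈ A, x * a * x⁻¹ * a⁻¹ ∈ N := fun a ha => ⟨⟨a, ha⟩, rfl⟩
  have hNA : N ≤ A := by
    rintro _ ⟨a, rfl⟩
    exact A.mul_mem (hN.conj_mem _ a.2 x) (A.inv_mem a.2)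
  have hNn : N.Normal := by
    rw [← Subgroup.normalizer_eq_top_iff]
    refine top_of _ x hx (fun a ha => ?_) ?_
    · rw [Subgroup.mem_normalizer_iff]
      intro n
      constructor
      · intro hn
        rw [hA a ha n (hNA hn), mul_inv_cancel_right]; exact hn
      · intro hn
        have hnA : n ∈ A := by
          have := hN.conj_mem _ (hNA hn) a⁻¹
          simpa [mul_assoc] using this
        rw [hA a ha n hnA, mul_inv_cancel_right] at hn; exact hn
    · apply Subgroup.mem_normalizer_fintype (S := (N : Set G))
      rintro _ ⟨a, rfl⟩
      have := memN (x * a * x⁻¹) (hN.conj_mem _ a.2 x)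
      have he : x * (x * a * x⁻¹ * (a : G)⁻¹) * x⁻¹ =
          x * (x * a * x⁻¹) * x⁻¹ * (x * a * x⁻¹)⁻¹ := by group
      rw [← he] at this
      exact this
  have hNc : commutator G ≤ N := by
    let q := QuotientGroup.mk' N
    have hxa : ∀ a ∈ A, q x * q a = q a * q x := by
      intro a ha
      have h1 : q (x * a * x⁻¹ * a⁻¹) = 1 := (QuotientGroup.eq_one_iff _).mpr (memN a ha)
      rw [map_mul, map_mul, map_mul, map_inv, map_inv, mul_inv_eq_one, mul_inv_eq_iff_eq_mul] at h1
      exact h1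
    have hS : ∀ y, (∀ a ∈ A, q a * q y = q y * q a) → q x * q y = q y * q x →
        ∀ g, q g * q y = q y * q g := by
      intro y h1 h2 g
      have : (Subgroup.centralizer {q y}).comap q = ⊤ := by
        refine top_of _ x hx (fun a ha => ?_) ?_
        · rw [Subgroup.mem_comap, Subgroup.mem_centralizer_singleton_iff]; exact h1 a ha
        · rw [Subgroup.mem_comap, Subgroup.mem_centralizer_singleton_iff]; exact h2
      have hg : g ∈ (Subgroup.centralizer {q y}).comap q := this ▸ Subgroup.mem_top g
      rw [Subgroup.mem_comap, Subgroup.mem_centralizer_singleton_iff] at hg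
      exact hg
    have hxc := hS x (fun a ha => (hxa a ha).symm) rfl
    have hac : ∀ a ∈ A, ∀ g, q g * q a = q a * q g := fun a ha =>
      hS a (fun b hb => by rw [← map_mul, ← map_mul, hA b hb a ha]) (hxa a ha)
    have hall : ∀ y g, q g * q y = q y * q g := fun y =>
      hS y (fun a ha => (hac a ha y).symm) (hxc y).symm
    rw [commutator_def, Subgroup.commutator_le]
    intro g _ h _
    rw [← QuotientGroup.eq_one_iff]
    change q (g * h * g⁻¹ * h⁻¹) = 1
    rw [map_mul, map_mul, map_mul, map_inv, map_inv, mul_inv_eq_one, mul_inv_eq_iff_eq_mul]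
    exact hall h g
  have rangele : ∀ (K L : Subgroup G) (hK : K ≤ A), ⁅K, (⊤ : Subgroup G)⁆ ≤ L →
      (commHom A hA x K hK).range ≤ L := by
    rintro K L hK hL _ ⟨a, rfl⟩
    apply hL
    rw [Subgroup.commutator_comm]
    exact Subgroup.commutator_mem_commutator (Subgroup.mem_top x) a.2
  have hNeq : N = commutator G := by
    refine le_antisymm (rangele A _ le_rfl ?_) hNc
    rw [commutator_def]
    exact Subgroup.commutator_mono le_top le_rfl
  refine ⟨hNc.trans hNA, ?_, ?_⟩
  · rw [cardK A le_rfl, ← hNdef, hNeq]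
    congr 1
    refine le_antisymm (kerle A le_rfl) ?_
    refine Nat.card_le_card_of_injective
      (fun z : Subgroup.center G => (⟨⟨z.1, hZA z.2⟩, (ker_cent A le_rfl _).mpr z.2⟩ :
        (commHom A hA x A le_rfl).ker)) ?_
    intro a b h
    exact Subtype.ext (congrArg (fun z : (commHom A hA x A le_rfl).ker => ((z : A) : G)) h)
  · intro K L hK hL
    rw [cardK K hK]
    exact Nat.mul_le_mul (kerle K hK)
      (Nat.card_le_card_of_injective _ (Subgroup.inclusion_injective (rangele K L hK hL)))

/-- Let `G` be a finite non-abelian `d`-group (`d` prime) of order `d^m`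
possessing an abelian maximal subgroup. Then `G` has maximal nilpotency class
(nilpotency class `m - 1`) if and only if either `|Z(G)| = d` or `[G : G'] = d²`. -/
theorem stmt3 {G : Type*} [Group G] [Finite G] [Group.IsNilpotent G]
    (d : ℕ) (hd : d.Prime) (m : ℕ)
    (hcard : Nat.card G = d ^ m)
    (hnab : ¬ ∀ a b : G, a * b = b * a)
    (hab : ∃ H : Subgroup G, IsCoatom H ∧ ∀ a ∈ H, ∀ b ∈ H, a * b = b * a) :
    Group.nilpotencyClass G = m - 1 ↔
      (Nat.card (Subgroup.center G) = d ∨ (commutator G).index = d ^ 2) := by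
  obtain ⟨A, hco, hA⟩ := hab
  have : Fact d.Prime := ⟨hd⟩
  have hN : A.Normal := Subgroup.NormalizerCondition.normal_of_coatom _
    Group.normalizerCondition_of_isNilpotent hco
  obtain ⟨hcA, hcardA, hstep⟩ := main_facts hnab A hco hA
  have hm : 2 ≤ m := by
    by_contra hlt
    have hcyc : IsCyclic G := by
      have : m = 0 ∨ m = 1 := by omega
      rcases this with rfl | rfl
      · rw [pow_zero] at hcard
        have : Subsingleton G := (Nat.card_eq_one_iff_unique.mp hcard).1
        infer_instance
      · rw [pow_one] at hcard
        exact isCyclic_of_prime_card hcard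
    exact hnab (IsCyclic.commGroup (α := G)).mul_comm
  have hAm : Nat.card A = d ^ (m - 1) := by
    obtain ⟨k, hkm, hk⟩ := (Nat.dvd_prime_pow hd).mp (hcard ▸ A.card_subgroup_dvd_card)
    have hkne : k ≠ m := by
      rintro rfl
      exact hco.1 (Subgroup.eq_top_of_card_eq A (hk.trans hcard.symm))
    obtain ⟨K, hK, hAK⟩ := Sylow.exists_subgroup_card_pow_prime_le d (m := m - 1)
      (hcard ▸ pow_dvd_pow d (Nat.sub_le m 1)) A hk (by omega)
    have hKt : K ≠ ⊤ := by
      rintro rfl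
      rw [Subgroup.card_top, hcard] at hK
      have := Nat.pow_right_injective hd.two_le hK
      omega
    rcases hAK.eq_or_lt with h | h
    · rw [h, hK]
    · exact absurd (hco.2 K h) hKt
  have hdpos := hd.pos
  have hGpos : 0 < Nat.card (commutator G) := Nat.card_pos
  -- |Z| = d iff index = d ^ 2
  have hiff : Nat.card (Subgroup.center G) = d ↔ (commutator G).index = d ^ 2 := by
    have h1 := Subgroup.card_mul_index (commutator G)
    have h2 : Nat.card G = d * Nat.card A := by
      rw [hcard, hAm, ← pow_succ']; congr 1; omega
    rw [h2, hcardA] at h1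
    have h3 : (commutator G).index = d * Nat.card (Subgroup.center G) := by
      apply Nat.eq_of_mul_eq_mul_left hGpos
      rw [h1]; ring
    rw [h3, sq]
    exact ⟨fun h => by rw [h], fun h => Nat.eq_of_mul_eq_mul_left hdpos h⟩
  rw [← hiff, or_self]
  have hmain := class_le_aux d hd m G hm hcard
  refine ⟨hmain.2 hnab, fun hZ => le_antisymm hmain.1 ?_⟩
  have hind : ∀ n, Nat.card (commutator G) ≤
      d ^ n * Nat.card ((⊤ : Subgroup G).lowerCentralSeries (n + 1)) := by
    intro n
    induction n with
    | zero => rw [pow_zero, one_mul]; exact le_rfl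
    | succ n ih =>
      have hle : (⊤ : Subgroup G).lowerCentralSeries (n + 1) ≤ A :=
        (Subgroup.lowerCentralSeries_antitone _ (by omega : 1 ≤ n + 1)).trans hcA
      have := hstep _ ((⊤ : Subgroup G).lowerCentralSeries (n + 1 + 1)) hle le_rfl
      rw [hZ] at this
      calc _ ≤ _ := ih
        _ ≤ d ^ n * (d * Nat.card ((⊤ : Subgroup G).lowerCentralSeries (n + 1 + 1))) :=
          Nat.mul_le_mul_left _ this
        _ = _ := by ring
  have hc1 : ¬ Group.nilpotencyClass G ≤ 1 := fun h =>
    hnab (Group.IsNilpotent.nilpotencyClass_le_one_iff.mp h).is_comm.comm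
  have h := hind (Group.nilpotencyClass G - 1)
  rw [show Group.nilpotencyClass G - 1 + 1 = Group.nilpotencyClass G by omega,
    Subgroup.lowerCentralSeries_nilpotencyClass, Subgroup.card_bot, mul_one] at h
  have h5 : d ^ (m - 1) ≤ d ^ (Group.nilpotencyClass G) := by
    rw [← hAm, hcardA, hZ]
    calc _ ≤ d * d ^ (Group.nilpotencyClass G - 1) := Nat.mul_le_mul_left _ h
      _ = _ := by rw [← pow_succ']; congr 1; omega
  exact (Nat.pow_le_pow_iff_right hd.one_lt).mp h5
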